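/- M · (M.map σ) = 2 · I₆, where M ∈ M₆(K) is the matrix with rows (α, 0, 0, 0, 0, 0), (0, α, 0, 0, 0, 0), (−(2α+1)t, 0, σ(α), 0, 0, 0), (−(α+4)t, −2(α+4)t, 0, α, 0, 0), (7(α+2)t², −2(2α+1)t, 3(σ(α)+4)t, 0, σ(α), 0), (7(σ(α)+4)t², −7(2α−3)t², 3(σ(α)+4)t, 4(2σ(α)+1)t, 0, σ(α)), and I₆ is the 6×6 identity matrix. -/

import Mathlib

/-!
Applying `σ` to `M` swaps `α` with its conjugate `σ α = -1 - α` and fixes `t` and the integers.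
Each entry of `M * M.map σ` is thus a polynomial in `α` and `t`, and it reduces to the entry of
`2 • 1` modulo `α² + α + 2`; on the diagonal this is the norm equation `α * σ α = 2`.
-/


/-- Let `K` be a field of characteristic zero, let `α ∈ K`
satisfy `α² + α + 2 = 0`, let `σ : K → K` be a ring homomorphism with
`σ(α) = −1 − α`, and let `t ∈ K` satisfy `σ(t) = t`.  Then `M · (M.map σ) = 2·I₆`
for the explicit 6×6 matrix `M` below. -/
theorem matrix6_mul_map_eq_two_smul_one
    {K : Type*} [Field K] [CharZero K] (α t : K) (σ : K →+* K)
    (hα : α^2 + α + 2 = 0) (hσ : σ α = -1 - α) (ht : σ t = t)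
    (M : Matrix (Fin 6) (Fin 6) K)
    (hM : M = !![α, 0, 0, 0, 0, 0;
                 0, α, 0, 0, 0, 0;
                 -(2*α + 1) * t, 0, σ α, 0, 0, 0;
                 -(α + 4) * t, -2*(α + 4) * t, 0, α, 0, 0;
                 7*(α + 2) * t^2, -2*(2*α + 1) * t, 3*(σ α + 4) * t, 0, σ α, 0;
                 7*(σ α + 4) * t^2, -7*(2*α - 3) * t^2, 3*(σ α + 4) * t,
                   4*(2*(σ α) + 1) * t, 0, σ α]) :
    M * M.map σ = (2 : K) • (1 : Matrix (Fin 6) (Fin 6) K) := by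
  have hσσ : σ (σ α) = α := by rw [hσ, map_sub, map_neg, map_one, hσ]; ring
  have h2 : σ 2 = 2 := map_ofNat σ 2
  have h3 : σ 3 = 3 := map_ofNat σ 3
  have h4 : σ 4 = 4 := map_ofNat σ 4
  have h7 : σ 7 = 7 := map_ofNat σ 7
  subst hM
  ext i j
  fin_cases i <;> fin_cases j <;>
    simp [Matrix.mul_apply, Fin.sum_univ_succ, hσσ, ht, h2, h3, h4, h7] <;>
    grind
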